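/- Let T ≥ 1, c > 0, γ > 0, and for t = 1,…,T let y_t ∈ ℝ^m and x_t ∈ ℝ^{p·m} (indexed by Fin p × Fin m). Let A₂ ∈ ℝ^{m×r₂} and A₃ ∈ ℝ^{p×r₃} have orthonormal columns, set K = A₃ ⊗ A₂, let G ∈ ℝ^{r₁×(r₃·r₂)} have all entries bounded in absolute value by c, and let U ∈ ℝ^{m×r₁} be arbitrary. For A₁ ∈ ℝ^{m×r₁} define ∇Ψ(A₁) = (1/T) Σ_{t=1}^T (A₁ G Kᵀ x_t − y_t) x_tᵀ K Gᵀ + γ (A₁ − U). Then for all A₁¹, A₁², ‖∇Ψ(A₁¹) − ∇Ψ(A₁²)‖_F ≤ (ν² c₁ + γ) ‖A₁¹ − A₁²‖_F, where ν = c√(r₁ r₂ r₃) and c₁ = (1/T) Σ_{t=1}^T ‖x_t‖₂². -/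

import Mathlib

open Matrix
open scoped Kronecker

/-- The Euclidean (ℓ²) norm of a real vector. -/
noncomputable def euclNorm {n : Type*} [Fintype n] (v : n → ℝ) : ℝ :=
  Real.sqrt (∑ i, (v i) ^ 2)

/-- The Frobenius norm of a real matrix. -/
noncomputable def frobNorm {m n : Type*} [Fintype m] [Fintype n] (A : Matrix m n ℝ) : ℝ :=
  Real.sqrt (∑ i, ∑ j, (A i j) ^ 2)

attribute [local instance] Matrix.frobeniusNormedAddCommGroup Matrix.frobeniusNormedSpace in
theorem frobNorm_eq_norm {m n : Type*} [Fintype m] [Fintype n] (A : Matrix m n ℝ) :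
    frobNorm A = ‖A‖ := by
  rw [Matrix.frobenius_norm_def, frobNorm, Real.sqrt_eq_rpow]
  simp

theorem euclNorm_sq {n : Type*} [Fintype n] (v : n → ℝ) : euclNorm v ^ 2 = ∑ i, (v i) ^ 2 :=
  Real.sq_sqrt (Finset.sum_nonneg fun _ _ => sq_nonneg _)

theorem frobNorm_vecMulVec {m n : Type*} [Fintype m] [Fintype n] (u : m → ℝ) (v : n → ℝ) :
    frobNorm (Matrix.vecMulVec u v) = euclNorm u * euclNorm v := by
  unfold frobNorm euclNorm
  rw [← Real.sqrt_mul (Finset.sum_nonneg fun _ _ => sq_nonneg _), Finset.sum_mul_sum]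
  simp only [Matrix.vecMulVec_apply, mul_pow]

theorem euclNorm_mulVec_le {m n : Type*} [Fintype m] [Fintype n] (D : Matrix m n ℝ) (v : n → ℝ) :
    euclNorm (D.mulVec v) ≤ frobNorm D * euclNorm v := by
  unfold frobNorm euclNorm
  have h0 : 0 ≤ ∑ i, ∑ j, (D i j) ^ 2 :=
    Finset.sum_nonneg fun _ _ => Finset.sum_nonneg fun _ _ => sq_nonneg _
  rw [← Real.sqrt_mul h0, Finset.sum_mul]
  apply Real.sqrt_le_sqrt
  apply Finset.sum_le_sum
  intro i _
  exact Finset.sum_mul_sq_le_sq_mul_sq _ _ _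

theorem euclNorm_transpose_mulVec_le {m n : Type*} [Fintype m] [Fintype n] [DecidableEq n]
    (K : Matrix m n ℝ) (hK : Kᵀ * K = 1) (v : m → ℝ) :
    euclNorm (Kᵀ.mulVec v) ≤ euclNorm v := by
  have key : ∀ w : m → ℝ, ∑ i, (w i) ^ 2 = w ⬝ᵥ w := by
    intro w
    simp [dotProduct, sq]
  have key' : ∑ i, (Kᵀ.mulVec v i) ^ 2 = Kᵀ.mulVec v ⬝ᵥ Kᵀ.mulVec v := by
    simp [dotProduct, sq]
  unfold euclNorm
  apply Real.sqrt_le_sqrt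
  rw [key v, key']
  set w := Kᵀ.mulVec v with hw
  have h0 : 0 ≤ (v - K.mulVec w) ⬝ᵥ (v - K.mulVec w) := by
    rw [← key]
    exact Finset.sum_nonneg fun _ _ => sq_nonneg _
  have h1 : v ⬝ᵥ K.mulVec w = w ⬝ᵥ w := by
    rw [Matrix.dotProduct_mulVec, ← Matrix.mulVec_transpose]
  have h2 : K.mulVec w ⬝ᵥ K.mulVec w = w ⬝ᵥ w := by
    rw [Matrix.dotProduct_mulVec, ← Matrix.mulVec_transpose, Matrix.mulVec_mulVec, hK,
      Matrix.one_mulVec]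
  rw [sub_dotProduct, dotProduct_sub, dotProduct_sub, h2, h1, dotProduct_comm (K.mulVec w) v, h1] at h0
  linarith

/-- Lipschitz continuity of the gradient of the penalized VAR loss with respect to
the response factor `A₁`: with
`∇Ψ(A₁) = (1/T) Σ_t (A₁ G Kᵀ x_t − y_t) x_tᵀ K Gᵀ + γ (A₁ − U)` and `K = A₃ ⊗ A₂`,
if `‖G‖_∞ ≤ c` then
`‖∇Ψ(A₁¹) − ∇Ψ(A₁²)‖_F ≤ (ν² c₁ + γ) ‖A₁¹ − A₁²‖_F`,
where `ν = c√(r₁r₂r₃)` and `c₁ = (1/T) Σ_t ‖x_t‖₂²`. -/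
theorem grad_factor_lipschitz
    (T m p r₁ r₂ r₃ : ℕ) (hT : 1 ≤ T)
    (c γ : ℝ) (hc : 0 < c) (hγ : 0 < γ)
    (y : Fin T → Fin m → ℝ) (x : Fin T → Fin p × Fin m → ℝ)
    (A₂ : Matrix (Fin m) (Fin r₂) ℝ) (A₃ : Matrix (Fin p) (Fin r₃) ℝ)
    (hA₂ : A₂ᵀ * A₂ = 1) (hA₃ : A₃ᵀ * A₃ = 1)
    (K : Matrix (Fin p × Fin m) (Fin r₃ × Fin r₂) ℝ) (hK : K = A₃ ⊗ₖ A₂)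
    (G : Matrix (Fin r₁) (Fin r₃ × Fin r₂) ℝ) (hG : ∀ i j, |G i j| ≤ c)
    (U : Matrix (Fin m) (Fin r₁) ℝ)
    (gradΨ : Matrix (Fin m) (Fin r₁) ℝ → Matrix (Fin m) (Fin r₁) ℝ)
    (hgradΨ : ∀ A₁, gradΨ A₁ = (T : ℝ)⁻¹ •
        (∑ t, Matrix.vecMulVec ((A₁ * G * Kᵀ).mulVec (x t) - y t) (x t) * K * Gᵀ)
        + γ • (A₁ - U)) :
    ∀ B₁ B₂ : Matrix (Fin m) (Fin r₁) ℝ,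
      frobNorm (gradΨ B₁ - gradΨ B₂)
        ≤ ((c * Real.sqrt ((r₁ : ℝ) * (r₂ : ℝ) * (r₃ : ℝ))) ^ 2
              * ((T : ℝ)⁻¹ * ∑ t, euclNorm (x t) ^ 2) + γ) * frobNorm (B₁ - B₂) := by
  intro B₁ B₂
  have hKK : Kᵀ * K = 1 := by
    rw [hK, ← Matrix.kroneckerMap_transpose, ← Matrix.mul_kronecker_mul, hA₂, hA₃,
      Matrix.one_kronecker_one]
  set ν := c * Real.sqrt ((r₁ : ℝ) * (r₂ : ℝ) * (r₃ : ℝ)) with hν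
  have hν0 : 0 ≤ ν := by positivity
  have hGF : frobNorm G ≤ ν := by
    have : ν = Real.sqrt (c ^ 2 * ((r₁ : ℝ) * (r₂ : ℝ) * (r₃ : ℝ))) := by
      rw [Real.sqrt_mul (sq_nonneg _), Real.sqrt_sq hc.le]
    rw [this]
    apply Real.sqrt_le_sqrt
    calc ∑ i, ∑ j, (G i j) ^ 2 ≤ ∑ _i : Fin r₁, ∑ _j : Fin r₃ × Fin r₂, c ^ 2 :=
          Finset.sum_le_sum fun i _ => Finset.sum_le_sum fun j _ =>
            sq_le_sq' (abs_le.mp (hG i j)).1 (abs_le.mp (hG i j)).2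
      _ = _ := by
          simp
          ring
  set D := B₁ - B₂ with hD
  have hdiff : gradΨ B₁ - gradΨ B₂ = (T : ℝ)⁻¹ •
      (∑ t, Matrix.vecMulVec (D.mulVec (G.mulVec (Kᵀ.mulVec (x t))))
        (G.mulVec (Kᵀ.mulVec (x t)))) + γ • D := by
    have hv : ∀ (u : Fin m → ℝ) t, Matrix.vecMulVec u (x t) * K * Gᵀ =
        Matrix.vecMulVec u (G.mulVec (Kᵀ.mulVec (x t))) := by
      intro u t
      rw [Matrix.vecMulVec_mul, Matrix.vecMulVec_mul, Matrix.mulVec_transpose,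
        Matrix.vecMul_transpose]
    have hs : ∀ t, Matrix.vecMulVec (D.mulVec (G.mulVec (Kᵀ.mulVec (x t))))
        (G.mulVec (Kᵀ.mulVec (x t))) =
        Matrix.vecMulVec ((B₁ * G * Kᵀ).mulVec (x t) - y t) (x t) * K * Gᵀ
        - Matrix.vecMulVec ((B₂ * G * Kᵀ).mulVec (x t) - y t) (x t) * K * Gᵀ := by
      intro t
      rw [hv, hv, ← Matrix.sub_vecMulVec, sub_sub_sub_cancel_right, hD, Matrix.sub_mulVec]
      simp only [Matrix.mulVec_mulVec, Matrix.mul_assoc]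
    rw [hgradΨ, hgradΨ, Finset.sum_congr rfl fun t _ => hs t, Finset.sum_sub_distrib, hD]
    module
  have hD0 : 0 ≤ frobNorm D := Real.sqrt_nonneg _
  have hterm : ∀ t, frobNorm (Matrix.vecMulVec (D.mulVec (G.mulVec (Kᵀ.mulVec (x t))))
        (G.mulVec (Kᵀ.mulVec (x t)))) ≤ ν ^ 2 * frobNorm D * euclNorm (x t) ^ 2 := by
    intro t
    have hx0 : 0 ≤ euclNorm (x t) := Real.sqrt_nonneg _
    have hw0 : 0 ≤ euclNorm (G.mulVec (Kᵀ.mulVec (x t))) := Real.sqrt_nonneg _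
    have hw : euclNorm (G.mulVec (Kᵀ.mulVec (x t))) ≤ ν * euclNorm (x t) :=
      (euclNorm_mulVec_le _ _).trans
        (mul_le_mul hGF (euclNorm_transpose_mulVec_le K hKK _) (Real.sqrt_nonneg _) hν0)
    rw [frobNorm_vecMulVec]
    calc _ ≤ (frobNorm D * euclNorm (G.mulVec (Kᵀ.mulVec (x t)))) *
            euclNorm (G.mulVec (Kᵀ.mulVec (x t))) :=
          mul_le_mul_of_nonneg_right (euclNorm_mulVec_le _ _) hw0
      _ ≤ (frobNorm D * (ν * euclNorm (x t))) * (ν * euclNorm (x t)) := by gcongr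
      _ = _ := by ring
  rw [hdiff]
  let _ := @Matrix.frobeniusNormedAddCommGroup (Fin m) (Fin r₁) ℝ _ _ _
  let _ := @Matrix.frobeniusNormedSpace ℝ (Fin m) (Fin r₁) ℝ _ _ _ _ _
  simp only [frobNorm_eq_norm (m := Fin m) (n := Fin r₁)] at hterm ⊢
  refine (norm_add_le _ _).trans ?_
  rw [norm_smul, norm_smul, Real.norm_of_nonneg hγ.le,
    Real.norm_of_nonneg (by positivity : (0 : ℝ) ≤ (T : ℝ)⁻¹), add_mul]
  refine add_le_add ?_ le_rfl
  calc _ ≤ (T : ℝ)⁻¹ * ∑ t, ν ^ 2 * ‖D‖ * euclNorm (x t) ^ 2 := by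
        refine mul_le_mul_of_nonneg_left ?_ (by positivity)
        exact norm_sum_le_of_le _ fun t _ => hterm t
    _ = _ := by
        rw [← Finset.mul_sum]
        ring
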